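/- arXiv:1807.07890 — 4 statements merged into one kernel-verified Lean document; each statement's English description precedes it below -/
import Mathlib

section
/- For every integer b ≥ 2 and every complex number s with Re(s) > 1, the Dirichlet series ∑_{n=1}^∞ (d_b(n) - d_b(n-1)) n^{-s} converges absolutely and equals ((b^s - b)/(b^s - 1)) · ζ(s). -/
noncomputable section

/-- The base-`b` digit sum of `n`. -/
def digitSum (b n : ℕ) : ℕ := (Nat.digits b n).sum

/-- The deficit `1 - (d_b(n) - d_b(n-1))`. -/
def deficit (b n : ℕ) : ℤ := 1 - ((digitSum b n : ℤ) - (digitSum b (n - 1) : ℤ))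

theorem digitSum_add_mul (b : ℕ) (hb : 2 ≤ b) (r m : ℕ) (hr : r < b) :
    digitSum b (r + b * m) = r + digitSum b m := by
  unfold digitSum
  by_cases h : r = 0 ∧ m = 0
  · obtain ⟨rfl, rfl⟩ := h; simp
  · rw [Nat.digits_add b (by omega) r m hr (by tauto)]
    simp

theorem deficit_of_not_dvd (b : ℕ) (hb : 2 ≤ b) (n : ℕ) (h : ¬ b ∣ n) : deficit b n = 0 := by
  have h0 : n % b ≠ 0 := fun h' => h (Nat.dvd_of_mod_eq_zero h')
  have hlt : n % b < b := Nat.mod_lt _ (by omega)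
  have e := Nat.mod_add_div n b
  have h1 := digitSum_add_mul b hb (n % b) (n / b) hlt
  have h2 := digitSum_add_mul b hb (n % b - 1) (n / b) (by omega)
  rw [e] at h1
  have e2 : n % b - 1 + b * (n / b) = n - 1 := by omega
  rw [e2] at h2
  unfold deficit
  omega

theorem deficit_mul (b : ℕ) (hb : 2 ≤ b) (m : ℕ) (hm : m ≠ 0) :
    deficit b (b * m) = deficit b m + (b - 1) := by
  have h1 := digitSum_add_mul b hb 0 m (by omega)
  have h2 := digitSum_add_mul b hb (b - 1) (m - 1) (by omega)
  have e : b - 1 + b * (m - 1) = b * m - 1 := by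
    obtain ⟨k, rfl⟩ := Nat.exists_eq_succ_of_ne_zero hm
    simp only [Nat.succ_eq_add_one, Nat.add_sub_cancel, Nat.mul_add]
    omega
  rw [e] at h2
  rw [Nat.zero_add] at h1
  unfold deficit
  omega

theorem deficit_bound (b : ℕ) (hb : 2 ≤ b) (n : ℕ) (hn : n ≠ 0) :
    0 ≤ (deficit b n : ℝ) ∧ (deficit b n : ℝ) ≤ (b - 1) / Real.log b * Real.log n := by
  have hb' : (2 : ℝ) ≤ b := by exact_mod_cast hb
  have hlog : 0 < Real.log b := Real.log_pos (by linarith)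
  induction n using Nat.strong_induction_on with
  | _ n ih =>
    by_cases h : b ∣ n
    · obtain ⟨m, rfl⟩ := h
      have hm : m ≠ 0 := by rintro rfl; simp at hn
      have hlt : m < b * m := by nlinarith [Nat.pos_of_ne_zero hm]
      obtain ⟨i1, i2⟩ := ih m hlt hm
      rw [deficit_mul b hb m hm]
      push_cast
      rw [Real.log_mul (by positivity) (by positivity), mul_add, div_mul_cancel₀ _ hlog.ne']
      constructor <;> linarith
    · rw [deficit_of_not_dvd b hb n h]
      have : 0 ≤ Real.log n := Real.log_natCast_nonneg n
      have h1 : (0:ℝ) ≤ b - 1 := by linarith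
      simp only [Int.cast_zero, le_refl, true_and]
      positivity

theorem summable_log_cpow (s : ℂ) (hs : 1 < s.re) :
    Summable (fun n : ℕ => Real.log n * ‖(n : ℂ) ^ (-s)‖) := by
  have h : LSeriesSummable (LSeries.logMul 1) s := by
    apply LSeriesSummable_logMul_of_lt_re
    rw [LSeries.abscissaOfAbsConv_one]
    exact_mod_cast hs
  have h2 : Summable (fun n => ‖LSeries.term (LSeries.logMul 1) s n‖) := h.norm
  refine h2.congr fun n => ?_
  rcases eq_or_ne n 0 with rfl | hn
  · simp
  · rw [LSeries.term_of_ne_zero hn, LSeries.logMul, Complex.cpow_neg, ← Complex.natCast_log,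
      norm_div, norm_mul, Complex.norm_real, norm_inv, Real.norm_of_nonneg (Real.log_natCast_nonneg n)]
    simp [div_eq_mul_inv]

theorem summable_deficit (b : ℕ) (hb : 2 ≤ b) (s : ℂ) (hs : 1 < s.re) :
    Summable (fun n : ℕ => (deficit b n : ℂ) * (n : ℂ) ^ (-s)) := by
  apply Summable.of_norm_bounded ((summable_log_cpow s hs).mul_left ((b - 1) / Real.log b))
  intro n
  rcases eq_or_ne n 0 with rfl | hn
  · have : s ≠ 0 := by rintro rfl; simp at hs; linarith
    simp [Complex.zero_cpow, this]
  · obtain ⟨h1, h2⟩ := deficit_bound b hb n hn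
    rw [norm_mul, ← mul_assoc]
    gcongr
    rw [Complex.norm_intCast, abs_of_nonneg h1]
    exact h2

theorem summable_cpow_neg (s : ℂ) (hs : 1 < s.re) :
    Summable (fun n : ℕ => (n : ℂ) ^ (-s)) := by
  have := Complex.summable_one_div_nat_cpow.mpr hs
  refine this.congr fun n => ?_
  rw [Complex.cpow_neg, one_div]

theorem tsum_deficit (b : ℕ) (hb : 2 ≤ b) (s : ℂ) (hs : 1 < s.re) :
    ∑' n : ℕ, (deficit b n : ℂ) * (n : ℂ) ^ (-s) =
      (b : ℂ) ^ (-s) * (∑' n : ℕ, (deficit b n : ℂ) * (n : ℂ) ^ (-s) + (b - 1) * riemannZeta s) := by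
  have hs0 : s ≠ 0 := by rintro rfl; simp at hs; linarith
  have hinj : Function.Injective (fun m : ℕ => b * m) :=
    fun x y h => Nat.eq_of_mul_eq_mul_left (by omega) h
  have hz : riemannZeta s = ∑' n : ℕ, (n : ℂ) ^ (-s) := by
    rw [zeta_eq_tsum_one_div_nat_cpow hs]
    exact tsum_congr fun n => by rw [Complex.cpow_neg, one_div]
  rw [hz, ← tsum_mul_left (a := (b : ℂ) - 1),
    ← (summable_deficit b hb s hs).tsum_add ((summable_cpow_neg s hs).mul_left _), ← tsum_mul_left]
  rw [← hinj.tsum_eq (f := fun n : ℕ => (deficit b n : ℂ) * (n : ℂ) ^ (-s))]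
  · refine tsum_congr fun m => ?_
    rcases eq_or_ne m 0 with rfl | hm
    · simp [Complex.zero_cpow, hs0]
    · simp only [deficit_mul b hb m hm]
      push_cast
      rw [Complex.natCast_mul_natCast_cpow]
      ring
  · intro n hn
    by_contra h
    apply hn
    have : ¬ b ∣ n := fun ⟨m, hm⟩ => h ⟨m, hm.symm⟩
    simp [deficit_of_not_dvd b hb n this]

theorem differenced_digitSum_dirichlet_eq
    (b : ℕ) (hb : 2 ≤ b) (s : ℂ) (hs : 1 < s.re) :
    Summable (fun n : ℕ =>
      ‖(((digitSum b (n + 1) : ℤ) - (digitSum b n : ℤ) : ℤ) : ℂ) * ((n + 1 : ℕ) : ℂ) ^ (-s)‖) ∧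
    (∑' n : ℕ,
        (((digitSum b (n + 1) : ℤ) - (digitSum b n : ℤ) : ℤ) : ℂ) * ((n + 1 : ℕ) : ℂ) ^ (-s)) =
      (Complex.exp (s * Real.log b) - b) / (Complex.exp (s * Real.log b) - 1)
        * riemannZeta s := by
  have hs0 : s ≠ 0 := by rintro rfl; simp at hs; linarith
  have hb0 : (b : ℂ) ≠ 0 := by exact_mod_cast (by omega : b ≠ 0)
  have hsd := summable_deficit b hb s hs
  have hsz := summable_cpow_neg s hs
  have hF := hsz.sub hsd
  have key : ∀ n : ℕ, (((digitSum b (n + 1) : ℤ) - (digitSum b n : ℤ) : ℤ) : ℂ)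
      * ((n + 1 : ℕ) : ℂ) ^ (-s) =
      ((n + 1 : ℕ) : ℂ) ^ (-s) - (deficit b (n + 1) : ℂ) * ((n + 1 : ℕ) : ℂ) ^ (-s) := by
    intro n
    unfold deficit
    rw [Nat.add_sub_cancel]
    push_cast
    ring
  simp only [key]
  refine ⟨((summable_nat_add_iff 1).mpr hF).norm, ?_⟩
  have h0 := hF.tsum_eq_zero_add
  simp only [Nat.cast_zero, Complex.zero_cpow (neg_ne_zero.mpr hs0), mul_zero, sub_zero,
    zero_add] at h0
  rw [← h0, hsz.tsum_sub hsd]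
  have hz : ∑' n : ℕ, (n : ℂ) ^ (-s) = riemannZeta s := by
    rw [zeta_eq_tsum_one_div_nat_cpow hs]
    exact tsum_congr fun n => by rw [Complex.cpow_neg, one_div]
  rw [hz]
  have hA := tsum_deficit b hb s hs
  have hE : (b : ℂ) ^ s = Complex.exp (s * Real.log b) := by
    rw [Complex.cpow_def_of_ne_zero hb0, Complex.natCast_log, mul_comm]
  rw [Complex.cpow_neg, hE] at hA
  have hE0 : Complex.exp (s * Real.log b) ≠ 0 := Complex.exp_ne_zero _
  have hE1 : Complex.exp (s * Real.log b) - 1 ≠ 0 := by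
    intro h
    have h1 : ‖Complex.exp (s * Real.log b)‖ = 1 := by rw [sub_eq_zero.mp h]; simp
    rw [Complex.norm_exp, Real.exp_eq_one_iff, Complex.re_mul_ofReal] at h1
    have : 0 < Real.log b := Real.log_pos (by exact_mod_cast (by omega : 1 < b))
    have : 0 < s.re * Real.log b := by positivity
    linarith
  generalize Complex.exp (s * Real.log b) = E at *
  generalize ∑' n : ℕ, (deficit b n : ℂ) * (n : ℂ) ^ (-s) = A at *
  rw [inv_mul_eq_div, eq_div_iff hE0] at hA
  rw [div_mul_eq_mul_div, eq_div_iff hE1]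
  linear_combination -hA
end
end

section
/- For every integer b ≥ 2 and every complex number s with Re(s) > 0, the Dirichlet series ∑_{n=1}^∞ (d_b(n) - d_b(n-1)) n^{-s} converges, i.e. the partial sums ∑_{n=1}^N (d_b(n) - d_b(n-1)) n^{-s} tend to a limit as N → ∞. -/
open Filter Topology

noncomputable section

lemma digitSum_zero' (b : ℕ) : digitSum b 0 = 0 := by simp [digitSum]

lemma digitSum_le_log (b : ℕ) (hb : 2 ≤ b) (n : ℕ) (hn : n ≠ 0) :
    digitSum b n ≤ (Nat.log b n + 1) * b := by
  unfold digitSum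
  have h := List.sum_le_card_nsmul (Nat.digits b n) b
    (fun x hx => (Nat.digits_lt_base (by omega) hx).le)
  rw [Nat.length_digits b n (by omega) hn] at h
  simpa using h

lemma digitSum_bound (b : ℕ) (hb : 2 ≤ b) (e : ℝ) (he : 0 < e) :
    ∃ C : ℝ, 0 ≤ C ∧ ∀ n : ℕ, (digitSum b n : ℝ) ≤ C * (n : ℝ) ^ e := by
  have hb1 : (1 : ℝ) < b := by exact_mod_cast hb
  have hlb : 0 < Real.log b := Real.log_pos hb1
  refine ⟨(1 / (e * Real.log b) + 1) * b, by positivity, fun n => ?_⟩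
  rcases Nat.eq_zero_or_pos n with rfl | hn
  · simp [digitSum_zero', Real.zero_rpow he.ne']
  have hn1 : (1 : ℝ) ≤ n := by exact_mod_cast hn
  have h1 : (digitSum b n : ℝ) ≤ ((Nat.log b n : ℝ) + 1) * b := by
    exact_mod_cast digitSum_le_log b hb n hn.ne'
  have h2 : (Nat.log b n : ℝ) ≤ Real.logb b n := Real.natLog_le_logb n b
  have h3 : Real.log n ≤ (n : ℝ) ^ e / e := Real.log_le_rpow_div (by positivity) he
  have h4 : (1 : ℝ) ≤ (n : ℝ) ^ e := Real.one_le_rpow hn1 he.le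
  have h5 : Real.logb b n ≤ 1 / (e * Real.log b) * (n : ℝ) ^ e := by
    unfold Real.logb
    calc Real.log n / Real.log b ≤ ((n : ℝ) ^ e / e) / Real.log b := by gcongr
      _ = _ := by field_simp
  calc (digitSum b n : ℝ) ≤ ((Nat.log b n : ℝ) + 1) * b := h1
    _ ≤ (1 / (e * Real.log b) * (n : ℝ) ^ e + (n : ℝ) ^ e) * b := by
        gcongr
        exact h2.trans h5
    _ = _ := by ring

lemma cpow_diff_bound (s : ℂ) (hs : 0 < s.re) (n : ℕ) (hn : 0 < n) :
    ‖((n : ℕ) : ℂ) ^ (-s) - ((n + 1 : ℕ) : ℂ) ^ (-s)‖ ≤ ‖s‖ * (n : ℝ) ^ (-s.re - 1) := by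
  have hn0 : (0 : ℝ) < n := by exact_mod_cast hn
  have hs0 : s ≠ 0 := by rintro rfl; simp at hs
  have key := Convex.norm_image_sub_le_of_norm_hasDerivWithin_le
    (f := fun x : ℝ => (x : ℂ) ^ (-s)) (f' := fun x : ℝ => (-s) * (x : ℂ) ^ (-s - 1))
    (s := Set.Icc (n : ℝ) (n + 1)) (x := (n : ℝ) + 1) (y := (n : ℝ))
    (C := ‖s‖ * (n : ℝ) ^ (-s.re - 1)) ?_ ?_ (convex_Icc _ _) (by simp) (by simp)
  · simpa using key
  · intro x hx
    have hx0 : 0 < x := hn0.trans_le hx.1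
    exact (hasDerivAt_ofReal_cpow_const hx0.ne' (by simpa using hs0)).hasDerivWithinAt
  · intro x hx
    have hx0 : 0 < x := hn0.trans_le hx.1
    rw [norm_mul, norm_neg, Complex.norm_cpow_eq_rpow_re_of_pos hx0]
    gcongr
    simp only [Complex.sub_re, Complex.neg_re, Complex.one_re]
    exact Real.rpow_le_rpow_of_nonpos hn0 hx.1 (by linarith)

theorem differenced_digitSum_dirichlet_conv
    (b : ℕ) (hb : 2 ≤ b) (s : ℂ) (hs : 0 < s.re) :
    ∃ L : ℂ, Tendsto
      (fun N : ℕ => ∑ n ∈ Finset.range N,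
        (((digitSum b (n + 1) : ℤ) - (digitSum b n : ℤ) : ℤ) : ℂ) * ((n + 1 : ℕ) : ℂ) ^ (-s))
      atTop (nhds L) := by
  obtain ⟨C, hC, hd⟩ := digitSum_bound b hb (s.re / 2) (by linarith)
  have habel : ∀ N : ℕ, ∑ n ∈ Finset.range N,
        (((digitSum b (n + 1) : ℤ) - (digitSum b n : ℤ) : ℤ) : ℂ) * ((n + 1 : ℕ) : ℂ) ^ (-s)
      = (∑ n ∈ Finset.range N,
          (digitSum b n : ℂ) * ((n : ℂ) ^ (-s) - ((n + 1 : ℕ) : ℂ) ^ (-s)))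
        + (digitSum b N : ℂ) * (N : ℂ) ^ (-s) := by
    intro N
    induction N with
    | zero => simp [digitSum_zero']
    | succ N ih =>
      rw [Finset.sum_range_succ, Finset.sum_range_succ, ih]
      push_cast
      ring
  have hsum : Summable (fun n : ℕ =>
      (digitSum b n : ℂ) * ((n : ℂ) ^ (-s) - ((n + 1 : ℕ) : ℂ) ^ (-s))) := by
    refine Summable.of_norm_bounded (g := fun n : ℕ => C * ‖s‖ * (n : ℝ) ^ (-(s.re / 2) - 1))
      ((Real.summable_nat_rpow.2 (by linarith)).mul_left _) fun n => ?_
    rcases Nat.eq_zero_or_pos n with rfl | hn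
    · simp only [digitSum_zero', Nat.cast_zero, zero_mul, norm_zero]
      positivity
    have hn0 : (0 : ℝ) < n := by exact_mod_cast hn
    rw [norm_mul, Complex.norm_natCast]
    calc _ ≤ (C * (n : ℝ) ^ (s.re / 2)) * (‖s‖ * (n : ℝ) ^ (-s.re - 1)) :=
          mul_le_mul (hd n) (cpow_diff_bound s hs n hn) (norm_nonneg _) (by positivity)
      _ = C * ‖s‖ * ((n : ℝ) ^ (s.re / 2) * (n : ℝ) ^ (-s.re - 1)) := by ring
      _ = _ := by
          rw [← Real.rpow_add hn0]
          congr 2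
          ring
  have hlim : Tendsto (fun N : ℕ => (digitSum b N : ℂ) * (N : ℂ) ^ (-s)) atTop (nhds 0) := by
    have h0 : Tendsto (fun N : ℕ => C * (N : ℝ) ^ (-(s.re / 2))) atTop (nhds 0) := by
      simpa using ((tendsto_rpow_neg_atTop (by linarith : 0 < s.re / 2)).comp
        tendsto_natCast_atTop_atTop).const_mul C
    refine squeeze_zero_norm' ?_ h0
    filter_upwards [eventually_gt_atTop 0] with n hn
    have hn0 : (0 : ℝ) < n := by exact_mod_cast hn
    rw [norm_mul, Complex.norm_natCast, Complex.norm_natCast_cpow_of_pos hn]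
    calc _ ≤ (C * (n : ℝ) ^ (s.re / 2)) * (n : ℝ) ^ ((-s).re) := by
          gcongr
          exact hd n
      _ = C * ((n : ℝ) ^ (s.re / 2) * (n : ℝ) ^ ((-s).re)) := by ring
      _ = _ := by
          rw [← Real.rpow_add hn0]
          congr 2
          simp only [Complex.neg_re]
          ring
  exact ⟨_, (hsum.hasSum.tendsto_sum_nat.add hlim).congr fun N => (habel N).symm⟩
end
end

section
/- Let b ≥ 2 be an integer. For every m ∈ ℤ, setting p = 2πim/log b, the function s ↦ (s - p) · ((b^s - b)/(b^s - 1)) · ζ(s) tends to -((b-1)/log b) · ζ(2πim/log b) as s → p with s ≠ p; in other words, Z_b(s) = ((b^s - b)/(b^s - 1)) ζ(s) has a simple pole at each point 2πim/log b with residue -((b-1)/log b) ζ(2πim/log b). -/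
open Filter Topology

noncomputable section

theorem Zb_simple_poles (b : ℕ) (hb : 2 ≤ b) (m : ℤ) :
    Filter.Tendsto
      (fun s : ℂ => (s - (2 * Real.pi * Complex.I * m / Real.log b)) *
        ((Complex.exp (s * Real.log b) - b) / (Complex.exp (s * Real.log b) - 1))
        * riemannZeta s)
      (𝓝[≠] (2 * Real.pi * Complex.I * m / Real.log b))
      (𝓝 (-(((b : ℂ) - 1) / (Real.log b)) *
        riemannZeta (2 * Real.pi * Complex.I * m / Real.log b))) := by
  have hb1 : (1 : ℝ) < b := by exact_mod_cast hb
  have hL : ((Real.log b : ℝ) : ℂ) ≠ 0 := by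
    exact_mod_cast (Real.log_pos hb1).ne'
  have hexpL : Complex.exp ((Real.log b : ℝ) : ℂ) = b := by
    rw [← Complex.ofReal_exp, Real.exp_log (by linarith)]
    simp
  generalize hLd : ((Real.log b : ℝ) : ℂ) = L at *
  generalize hp : (2 * Real.pi * Complex.I * m / L : ℂ) = p
  have hpe : Complex.exp (p * L) = 1 := by
    rw [← hp, div_mul_cancel₀ _ hL, Complex.exp_eq_one_iff]
    exact ⟨m, by ring⟩
  have hp1 : p ≠ 1 := by
    intro h
    rw [h, one_mul, hexpL] at hpe
    have : b = 1 := by exact_mod_cast hpe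
    omega
  have hz : Tendsto riemannZeta (𝓝[≠] p) (𝓝 (riemannZeta p)) :=
    (differentiableAt_riemannZeta hp1).continuousAt.tendsto.mono_left nhdsWithin_le_nhds
  have hder : HasDerivAt (fun s : ℂ => Complex.exp (s * L)) L p := by
    have := ((hasDerivAt_id p).mul_const L).cexp
    simpa [hpe] using this
  have hs := (hasDerivAt_iff_tendsto_slope.mp hder).inv₀ hL
  have hn : Tendsto (fun s : ℂ => Complex.exp (s * L) - b) (𝓝[≠] p) (𝓝 (1 - b)) := by
    have := (hder.continuousAt.tendsto.mono_left (nhdsWithin_le_nhds (s := {p}ᶜ))).sub_const (b : ℂ)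
    simpa only [hpe] using this
  have := (hs.mul hn).mul hz
  convert this using 2
  · simp only [slope_def_field, hpe, inv_div]
    ring
  · ring
end
end

section
/- Let b ≥ 2 be an integer. The function s ↦ ((b^s - b)/(b^s - 1)) · ζ(s) - ((b-1)/(2 log b)) · s^{-1} tends to ((b-1)/(2 log b)) · log(2π) - (b+1)/4 as s → 0 with s ≠ 0; i.e. the Laurent expansion of ((b^s - b)/(b^s - 1)) ζ(s) at s = 0 begins ((b-1)/(2 log b)) s^{-1} + ( ((b-1)/(2 log b)) log(2π) - (b+1)/4 ) + O(s). -/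
open Filter Topology

noncomputable section

theorem aux_exp (L : ℂ) : Tendsto (fun s : ℂ => (Complex.exp (s * L) - 1 - s * L) / s ^ 2)
    (𝓝[≠] (0 : ℂ)) (𝓝 (L ^ 2 / 2)) := by
  have h1 : (fun s : ℂ => Complex.exp (s * L) - ∑ i ∈ Finset.range 3, (s * L) ^ i / (Nat.factorial i : ℂ))
      =O[𝓝 0] fun s : ℂ => (s * L) ^ 3 := by
    have ht : Tendsto (fun s : ℂ => s * L) (𝓝 0) (𝓝 0) := by
      have : Continuous (fun s : ℂ => s * L) := by fun_prop
      simpa using this.tendsto 0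
    exact (Complex.exp_sub_sum_range_isBigO_pow 3).comp_tendsto ht
  obtain ⟨C, hC⟩ := h1.bound
  rw [tendsto_iff_norm_sub_tendsto_zero]
  have hz : Tendsto (fun s : ℂ => C * ‖L‖ ^ 3 * ‖s‖) (𝓝[≠] (0 : ℂ)) (𝓝 0) := by
    have : Continuous (fun s : ℂ => C * ‖L‖ ^ 3 * ‖s‖) := by fun_prop
    have h := this.tendsto 0
    simp only [norm_zero, mul_zero] at h
    exact h.mono_left nhdsWithin_le_nhds
  refine squeeze_zero' (Eventually.of_forall fun _ => norm_nonneg _) ?_ hz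
  filter_upwards [hC.filter_mono nhdsWithin_le_nhds, self_mem_nhdsWithin] with s hs hs0
  have hs0 : s ≠ 0 := hs0
  have e : (Complex.exp (s * L) - 1 - s * L) / s ^ 2 - L ^ 2 / 2
      = (Complex.exp (s * L) - ∑ i ∈ Finset.range 3, (s * L) ^ i / (Nat.factorial i : ℂ)) / s ^ 2 := by
    simp [Finset.sum_range_succ, Nat.factorial]
    field_simp
    ring
  have hp : 0 < ‖s‖ ^ 2 := by positivity
  rw [e, norm_div, norm_pow, div_le_iff₀ hp]
  calc _ ≤ _ := hs
    _ = _ := by rw [norm_pow, norm_mul]; ring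

theorem Zb_laurent_at_zero (b : ℕ) (hb : 2 ≤ b) :
    Filter.Tendsto
      (fun s : ℂ =>
        (Complex.exp (s * Real.log b) - b) / (Complex.exp (s * Real.log b) - 1)
          * riemannZeta s
        - (((b : ℂ) - 1) / (2 * Real.log b)) * s⁻¹)
      (𝓝[≠] (0 : ℂ))
      (𝓝 ((((b : ℂ) - 1) / (2 * Real.log b)) * Real.log (2 * Real.pi)
        - ((b : ℂ) + 1) / 4)) := by
  have hL : ((Real.log b : ℝ) : ℂ) ≠ 0 := by
    have : 0 < Real.log b := Real.log_pos (by exact_mod_cast hb)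
    exact_mod_cast this.ne'
  generalize ((Real.log b : ℝ) : ℂ) = L at hL ⊢
  have hzd : DifferentiableAt ℂ riemannZeta 0 := differentiableAt_riemannZeta (by norm_num)
  have hz0 : Tendsto riemannZeta (𝓝[≠] 0) (𝓝 (-1 / 2)) := by
    have := hzd.continuousAt.tendsto
    rw [riemannZeta_zero] at this
    exact this.mono_left nhdsWithin_le_nhds
  have hzs : Tendsto (fun s : ℂ => (riemannZeta s + 1 / 2) / s) (𝓝[≠] 0)
      (𝓝 (-(Real.log (2 * Real.pi) : ℂ) / 2)) := by
    have := hzd.hasDerivAt.tendsto_slope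
    rw [deriv_riemannZeta_zero] at this
    have h2 : Complex.log (2 * Real.pi) = (Real.log (2 * Real.pi) : ℂ) := by
      rw [Complex.ofReal_log (by positivity)]; push_cast; rfl
    rw [h2] at this
    refine this.congr fun s => ?_
    rw [slope_def_field, riemannZeta_zero]
    ring
  have hE1 : Tendsto (fun s : ℂ => (Complex.exp (s * L) - 1) / s) (𝓝[≠] 0) (𝓝 L) := by
    have hd : HasDerivAt (fun s : ℂ => Complex.exp (s * L)) L 0 := by
      simpa using ((hasDerivAt_id (0 : ℂ)).mul_const L).cexp
    refine hd.tendsto_slope.congr fun s => ?_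
    rw [slope_def_field]
    simp
  have hE2 := aux_exp L
  have key := hz0.sub (((hzs.div hE1 hL).add
    ((hE2.div (hE1.const_mul L) (mul_ne_zero hL hL)).const_mul (1 / 2))).const_mul ((b : ℂ) - 1))
  have hne : ∀ᶠ s : ℂ in 𝓝[≠] 0, (Complex.exp (s * L) - 1) / s ≠ 0 := hE1.eventually_ne hL
  convert key.congr' ?_ using 2
  · field_simp
    ring
  · filter_upwards [hne, self_mem_nhdsWithin] with s hs hs0
    have hs0 : s ≠ 0 := hs0
    have hE : Complex.exp (s * L) - 1 ≠ 0 := fun h => hs (by rw [h, zero_div])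
    simp only [Pi.div_apply]
    field_simp
    ring
end
end
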